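/- arXiv:2408.09390 — 2 statements merged into one kernel-verified Lean document; each statement's English description precedes it below -/
import Mathlib

section
/- Suppose n = 2^k with k ≥ 1 (so that k₂ = k). Then there is an isomorphism of 𝔽₂-algebras P^τ ≅ 𝔽₂[e₁, e₂, …, e_s]/(e₁^{2^k}, e₂^{2^k}, e₃^{2^{k₃}}, …, e_s^{2^{k_s}}, e₁·(Σ_{j=0}^{k−1} e₁^{2^k−2^{j+1}}·e₂^{2^j})), given by e₁ ↦ ε̄₁, e₂ ↦ ε̄₂² + ε̄₁ε̄₂, and e_i ↦ ε̄_i + ε̄₁^{2i−4}ε̄₂ for 3 ≤ i ≤ s. -/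
open MvPolynomial

set_option synthInstance.maxHeartbeats 1000000
set_option maxHeartbeats 1000000

noncomputable section

/-- The ideal `(ε₁ⁿ, ε₂^{2^{k₂}}, …, ε_s^{2^{k_s}})` of `𝔽₂[ε₁,…,ε_s]`, where
`s = n/2 + 1` and the variable of index `i : Fin (n/2+1)` is `ε_{i+1}`. -/
def relIdealP (n : ℕ) (k : ℕ → ℕ) : Ideal (MvPolynomial (Fin (n / 2 + 1)) (ZMod 2)) :=
  Ideal.span (Set.range fun i : Fin (n / 2 + 1) =>
    X i ^ (if (i : ℕ) = 0 then n else 2 ^ k ((i : ℕ) + 1)))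

/-- `P = 𝔽₂[ε₁,…,ε_s]/(ε₁ⁿ, ε₂^{2^{k₂}}, …, ε_s^{2^{k_s}})` with `s = n/2 + 1`. -/
abbrev P (n : ℕ) (k : ℕ → ℕ) : Type :=
  MvPolynomial (Fin (n / 2 + 1)) (ZMod 2) ⧸ relIdealP n k

/-- `ε̄_{i+1}`, the class in `P` of the variable of index `i`. -/
def eps (n : ℕ) (k : ℕ → ℕ) (i : Fin (n / 2 + 1)) : P n k :=
  Ideal.Quotient.mk _ (X i)

/-- The subalgebra `P^τ` of `τ`-invariant elements. -/
def Pfix (n : ℕ) (k : ℕ → ℕ) (τ : P n k →ₐ[ZMod 2] P n k) : Subalgebra (ZMod 2) (P n k) :=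
  AlgHom.equalizer τ (AlgHom.id (ZMod 2) (P n k))

end

noncomputable section

/-- The ideal `(e₁^{2^K}, e₂^{2^K}, e₃^{2^{k₃}}, …, e_s^{2^{k_s}},
e₁·(Σ_{j=0}^{K−1} e₁^{2^K−2^{j+1}}·e₂^{2^j}))` of `𝔽₂[e₁,…,e_s]`, the variable of
index `c : Fin (n/2+1)` being `e_{c+1}`. -/
def relIdealPow (n K : ℕ) (k : ℕ → ℕ) : Ideal (MvPolynomial (Fin (n / 2 + 1)) (ZMod 2)) :=
  Ideal.span (insert
    (X 0 * ∑ j ∈ Finset.range K, X 0 ^ (2 ^ K - 2 ^ (j + 1)) * X 1 ^ 2 ^ j)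
    (Set.range fun c : Fin (n / 2 + 1) =>
      if (c : ℕ) ≤ 1 then X c ^ 2 ^ K else X c ^ 2 ^ k ((c : ℕ) + 1)))

end

/-!
Write `x = ε̄₁`, `y = ε̄₂` and `N = 2^K`. The involution adds `x` to `y`, and the elements `x`,
`e = y² + x y` and `ε̄_i + x^{2i-4} y` for `i ≥ 3` are invariant. Over the truncated polynomial
ring `R` in these invariants, with `e` left free, `y` is a root of `y² = e + x y`, so that
`P = R[y] / (y² - e - x y, y^N)` and `τ` is the conjugation of the quadratic algebra
`R[y] / (y² - e - x y)`. In characteristic two repeated squaring gives `y^N = S + x^{N-1} y`, where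
`S = Σ_{j<K} x^{N-2^{j+1}} e^{2^j}`. Comparing coefficients in the basis `1, y` modulo `y^N` then
shows that `R → P` has kernel `(x S, e^N)` and that every invariant lies in its image.
-/

/-- The sum `Σ_{j<K} x^{2^K−2^{j+1}}·e^{2^j}`: the absolute trace `Σ_{j<K} t^{2^j}` at `t = e/x²`,
cleared of denominators by `x^{2^K}`. -/
def frobSum {R : Type*} [CommRing R] (K : ℕ) (x e : R) : R :=
  ∑ j ∈ Finset.range K, x ^ (2 ^ K - 2 ^ (j + 1)) * e ^ 2 ^ j

lemma map_frobSum {R S : Type*} [CommRing R] [CommRing S] (f : R →+* S) (K : ℕ) (x e : R) :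
    f (frobSum K x e) = frobSum K (f x) (f e) := by
  simp only [frobSum, map_sum, map_mul, map_pow]

lemma two_eq_zero_of_ringHom {R S : Type*} [CommRing R] [CommRing S] (f : R →+* S)
    (h2 : (2 : R) = 0) : (2 : S) = 0 := by
  rw [← map_ofNat f 2, h2, map_zero]

section FrobeniusSum

variable {R : Type*} [CommRing R]

lemma add_pow_two_pow (h2 : (2 : R) = 0) (a b : R) (m : ℕ) :
    (a + b) ^ 2 ^ m = a ^ 2 ^ m + b ^ 2 ^ m := by
  rw [add_pow_prime_pow_eq Nat.prime_two, Nat.cast_ofNat, h2, zero_mul, zero_mul, zero_mul,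
    add_zero]

lemma frobSum_succ (K : ℕ) (x e : R) :
    frobSum (K + 1) x e = x ^ 2 ^ K * frobSum K x e + e ^ 2 ^ K := by
  rw [frobSum, Finset.sum_range_succ, Nat.sub_self, pow_zero, one_mul, frobSum, Finset.mul_sum]
  congr 1
  refine Finset.sum_congr rfl fun j hj => ?_
  have hle : 2 ^ (j + 1) ≤ 2 ^ K := Nat.pow_le_pow_right two_pos (Finset.mem_range.mp hj)
  rw [← mul_assoc, ← pow_add]
  congr 2
  rw [pow_succ 2 K]
  omega

lemma frobSum_succ_eq_sq_add (h2 : (2 : R) = 0) (K : ℕ) (x e : R) :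
    frobSum (K + 1) x e = frobSum K x e ^ 2 + x ^ (2 ^ (K + 1) - 2) * e := by
  induction K with
  | zero => simp [frobSum]
  | succ K ih =>
    have hexp : x ^ (2 ^ (K + 2) - 2) = x ^ 2 ^ (K + 1) * x ^ (2 ^ (K + 1) - 2) := by
      rw [← pow_add]
      congr 1
      have : 2 ≤ 2 ^ (K + 1) := Nat.le_self_pow K.succ_ne_zero 2
      rw [pow_succ 2 (K + 1)]
      omega
    calc frobSum (K + 2) x e
        = x ^ 2 ^ (K + 1) * (frobSum K x e ^ 2 + x ^ (2 ^ (K + 1) - 2) * e) + e ^ 2 ^ (K + 1) := by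
          rw [frobSum_succ, ih]
      _ = (x ^ 2 ^ K * frobSum K x e + e ^ 2 ^ K) ^ 2 + x ^ (2 ^ (K + 2) - 2) * e := by
          rw [hexp]
          linear_combination (-(x ^ 2 ^ K * frobSum K x e * e ^ 2 ^ K)) * h2
      _ = frobSum (K + 1) x e ^ 2 + x ^ (2 ^ (K + 2) - 2) * e := by rw [frobSum_succ]

lemma frobSum_sq (h2 : (2 : R) = 0) {K : ℕ} (hK : 1 ≤ K) {x : R} (hx : x ^ 2 ^ K = 0) (e : R) :
    frobSum K x e ^ 2 = e ^ 2 ^ K := by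
  have hN : 2 ≤ 2 ^ K := Nat.le_self_pow (by omega) 2
  have hx' : x ^ (2 ^ (K + 1) - 2) = 0 := pow_eq_zero_of_le (by omega) hx
  linear_combination frobSum_succ K x e - frobSum_succ_eq_sq_add h2 K x e
    + frobSum K x e * hx - e * hx'

lemma pow_two_pow_eq_frobSum_add (h2 : (2 : R) = 0) (K : ℕ) {x e y : R} (hy : y ^ 2 = e + x * y) :
    y ^ 2 ^ K = frobSum K x e + x ^ (2 ^ K - 1) * y := by
  induction K with
  | zero => simp [frobSum]
  | succ K ih =>
    have h1 : 1 ≤ 2 ^ K := Nat.one_le_two_pow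
    have hsq : x ^ (2 ^ (K + 1) - 2) = (x ^ (2 ^ K - 1)) ^ 2 := by
      rw [← pow_mul]
      congr 1
      omega
    have hexp : x ^ (2 ^ (K + 1) - 1) = x ^ (2 ^ (K + 1) - 2) * x := by
      rw [← pow_succ]
      congr 1
      omega
    calc y ^ 2 ^ (K + 1)
        = (frobSum K x e + x ^ (2 ^ K - 1) * y) ^ 2 := by rw [pow_succ 2 K, pow_mul, ih]
      _ = frobSum K x e ^ 2 + x ^ (2 ^ (K + 1) - 2) * (e + x * y) := by
          rw [hsq]
          linear_combination (frobSum K x e * x ^ (2 ^ K - 1) * y) * h2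
            + (x ^ (2 ^ K - 1)) ^ 2 * hy
      _ = frobSum (K + 1) x e + x ^ (2 ^ (K + 1) - 1) * y := by
          rw [frobSum_succ_eq_sq_add h2, hexp]
          ring

end FrobeniusSum

section QuadraticAlgebra

variable {R : Type*} [CommRing R] {x e : R}

open QuadraticAlgebra

lemma quadraticAlgebra_mk_eq (a b : R) :
    (⟨a, b⟩ : QuadraticAlgebra R e x) = algebraMap R _ a + algebraMap R _ b * omega := by
  rw [mk_eq_add_smul_omega, Algebra.smul_def]

lemma omega_pow_two_pow (h2 : (2 : R) = 0) (K : ℕ) :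
    (omega : QuadraticAlgebra R e x) ^ 2 ^ K = ⟨frobSum K x e, x ^ (2 ^ K - 1)⟩ := by
  have hω : (omega : QuadraticAlgebra R e x) ^ 2 = algebraMap R _ e + algebraMap R _ x * omega := by
    rw [sq, omega_mul_omega_eq_algebraMap]
  rw [pow_two_pow_eq_frobSum_add (two_eq_zero_of_ringHom (algebraMap R _) h2) K hω,
    ← map_frobSum, ← map_pow, quadraticAlgebra_mk_eq]

end QuadraticAlgebra

/-- `x` and `e` behave in `R` like the two variables in `B[x, e]/(x^N)` over a base ring `B`:
the annihilator of `x^j` is generated by `x^{N-j}`, and `e` is regular modulo `x`. -/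
structure IsTruncatedPair {R : Type*} [CommRing R] (N : ℕ) (x e : R) : Prop where
  pow_eq_zero : x ^ N = 0
  pow_sub_dvd : ∀ (j : ℕ) (c : R), x ^ j * c = 0 → x ^ (N - j) ∣ c
  dvd_of_dvd_mul : ∀ c : R, x ∣ e * c → x ∣ c

namespace IsTruncatedPair

variable {R : Type*} [CommRing R] {x e : R}

lemma pow_dvd_of_pow_dvd_mul {N : ℕ} (h : IsTruncatedPair N x e) {u : R}
    (hu : ∀ c, x ∣ u * c → x ∣ c) {m : ℕ} (hm : m ≤ N) {c : R} (hc : x ^ m ∣ u * c) :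
    x ^ m ∣ c := by
  induction m generalizing c with
  | zero => simp
  | succ m ih =>
    obtain ⟨c, rfl⟩ := hu c ((dvd_pow_self x m.succ_ne_zero).trans hc)
    obtain ⟨q, hq⟩ := hc
    have hdvd : x ^ (N - 1) ∣ u * c - x ^ m * q :=
      h.pow_sub_dvd 1 _ (by linear_combination hq)
    have huc : x ^ m ∣ u * c :=
      (dvd_sub_left (dvd_mul_right _ _)).mp ((pow_dvd_pow x (by omega)).trans hdvd)
    rw [pow_succ']
    exact mul_dvd_mul_left x (ih (by omega) huc)

lemma dvd_of_dvd_pow_mul {N : ℕ} (h : IsTruncatedPair N x e) (r : ℕ) {c : R}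
    (hc : x ∣ e ^ r * c) : x ∣ c := by
  induction r with
  | zero => simpa using hc
  | succ r ih => exact ih (h.dvd_of_dvd_mul _ (by rwa [← mul_assoc, ← pow_succ']))

variable {K : ℕ}

lemma dvd_of_dvd_frobSum_mul {N : ℕ} (h : IsTruncatedPair N x e) (hK : 1 ≤ K) {c : R}
    (hc : x ∣ frobSum K x e * c) : x ∣ c := by
  obtain ⟨L, rfl⟩ : ∃ L, K = L + 1 := ⟨K - 1, by omega⟩
  rw [frobSum_succ, add_mul, mul_assoc] at hc
  have hx : x ∣ x ^ 2 ^ L * (frobSum L x e * c) :=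
    (dvd_pow_self x (by positivity)).mul_right _
  exact h.dvd_of_dvd_pow_mul _ ((dvd_add_right hx).mp hc)

lemma pow_pred_mul_self (h : IsTruncatedPair (2 ^ K) x e) : x ^ (2 ^ K - 1) * x = 0 := by
  rw [← pow_succ, Nat.sub_add_cancel Nat.one_le_two_pow, h.pow_eq_zero]

lemma mem_span_of_mul_add_mul_eq_zero (h : IsTruncatedPair (2 ^ K) x e) (hK : 1 ≤ K)
    (h2 : (2 : R) = 0) {α β : R} (hαβ : x ^ (2 ^ K - 1) * α + frobSum K x e * β = 0) :
    frobSum K x e * α + x ^ (2 ^ K - 1) * e * β ∈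
      Ideal.span {x * frobSum K x e, e ^ 2 ^ K} := by
  have hN : 2 ≤ 2 ^ K := Nat.le_self_pow (by omega) 2
  obtain ⟨β, rfl⟩ : x ^ (2 ^ K - 1) ∣ β :=
    h.pow_dvd_of_pow_dvd_mul (fun _ => h.dvd_of_dvd_frobSum_mul hK) (by omega)
      ⟨-α, by linear_combination hαβ⟩
  obtain ⟨γ, hγ⟩ : x ∣ α + frobSum K x e * β := by
    have hdvd := h.pow_sub_dvd (2 ^ K - 1) (α + frobSum K x e * β) (by linear_combination hαβ)
    rwa [Nat.sub_sub_self (by omega), pow_one] at hdvd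
  have hsq : x ^ (2 ^ K - 1) * x ^ (2 ^ K - 1) = 0 := by
    rw [← pow_add]
    exact pow_eq_zero_of_le (by omega) h.pow_eq_zero
  refine Ideal.mem_span_pair.mpr ⟨γ, -β, ?_⟩
  linear_combination -frobSum K x e * hγ - e * β * hsq + β * frobSum_sq h2 hK h.pow_eq_zero e

lemma mem_span_of_mul_mem_span (h : IsTruncatedPair (2 ^ K) x e) (hK : 1 ≤ K) (h2 : (2 : R) = 0)
    {b : R} (hb : x * b ∈ Ideal.span {x * frobSum K x e, e ^ 2 ^ K}) :
    b ∈ Ideal.span {frobSum K x e, x ^ (2 ^ K - 1)} := by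
  obtain ⟨c, d, hcd⟩ := Ideal.mem_span_pair.mp hb
  obtain ⟨d, rfl⟩ : x ∣ d :=
    h.dvd_of_dvd_pow_mul (2 ^ K) ⟨b - c * frobSum K x e, by linear_combination hcd⟩
  obtain ⟨f, hf⟩ : x ^ (2 ^ K - 1) ∣ b - (c + d * frobSum K x e) * frobSum K x e :=
    h.pow_sub_dvd 1 _ (by
      linear_combination -hcd - d * x * frobSum_sq h2 hK h.pow_eq_zero e)
  exact Ideal.mem_span_pair.mpr ⟨c + d * frobSum K x e, f, by linear_combination -hf⟩

open QuadraticAlgebra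

theorem omega_pow_dvd_algebraMap_iff (h : IsTruncatedPair (2 ^ K) x e) (hK : 1 ≤ K)
    (h2 : (2 : R) = 0) {a : R} :
    (omega : QuadraticAlgebra R e x) ^ 2 ^ K ∣ algebraMap R _ a ↔
      a ∈ Ideal.span {x * frobSum K x e, e ^ 2 ^ K} := by
  constructor
  · rintro ⟨⟨α, β⟩, ht⟩
    rw [omega_pow_two_pow h2, mk_mul_mk, QuadraticAlgebra.algebraMap_eq,
      QuadraticAlgebra.mk.injEq] at ht
    obtain ⟨rfl, him⟩ := ht
    rw [mul_comm e]
    exact h.mem_span_of_mul_add_mul_eq_zero hK h2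
      (by linear_combination -him - β * h.pow_pred_mul_self)
  · intro ha
    obtain ⟨c, d, rfl⟩ := Ideal.mem_span_pair.mp ha
    have hS : (omega : QuadraticAlgebra R e x) ^ 2 ^ K ∣ algebraMap R _ (x * frobSum K x e) := by
      refine ⟨algebraMap R _ x, ?_⟩
      rw [omega_pow_two_pow h2, QuadraticAlgebra.algebraMap_eq, QuadraticAlgebra.algebraMap_eq,
        mk_mul_mk, mul_zero, mul_zero, mul_zero, add_zero, zero_add, add_zero,
        h.pow_pred_mul_self, mul_comm x]
    have he : (omega : QuadraticAlgebra R e x) ∣ algebraMap R _ e :=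
      ⟨omega - algebraMap R _ x, by rw [mul_sub, omega_mul_omega_eq_algebraMap]; ring⟩
    rw [map_add, map_mul, map_mul _ d, map_pow]
    exact dvd_add (hS.mul_left _) ((pow_dvd_pow_of_dvd he _).mul_left _)

theorem exists_omega_pow_dvd_sub_algebraMap (h : IsTruncatedPair (2 ^ K) x e) (hK : 1 ≤ K)
    (h2 : (2 : R) = 0) {t : QuadraticAlgebra R e x} (ht : omega ^ 2 ^ K ∣ star t - t) :
    ∃ a : R, omega ^ 2 ^ K ∣ t - algebraMap R _ a := by
  obtain ⟨α, β⟩ := t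
  have hstar : star (⟨α, β⟩ : QuadraticAlgebra R e x) - ⟨α, β⟩ = algebraMap R _ (x * β) := by
    rw [star_mk, mk_sub_mk, QuadraticAlgebra.algebraMap_eq, add_sub_cancel_left]
    congr 1
    linear_combination -β * h2
  rw [hstar, h.omega_pow_dvd_algebraMap_iff hK h2] at ht
  obtain ⟨c, d, rfl⟩ := Ideal.mem_span_pair.mp (h.mem_span_of_mul_mem_span hK h2 ht)
  refine ⟨α - (d * frobSum K x e + c * x ^ (2 ^ K - 1) * e), ⟨d, c⟩, ?_⟩
  rw [omega_pow_two_pow h2, mk_mul_mk, QuadraticAlgebra.algebraMap_eq, mk_sub_mk]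
  congr 1
  · ring
  · linear_combination -c * h.pow_pred_mul_self

end IsTruncatedPair

section Presentation

variable {σ C : Type*} [CommRing C]

variable (C) in
/-- The ideal `(X_i^{d_i} : i ∈ σ)`. -/
noncomputable def powIdeal (d : σ → ℕ) : Ideal (MvPolynomial σ C) :=
  Ideal.span (Set.range fun i => X i ^ d i)

variable (C) in
/-- The ideal `(X_i^{d_i} : i ∈ A)`. -/
noncomputable def powIdealOn (d : σ → ℕ) (A : Set σ) : Ideal (MvPolynomial σ C) :=
  Ideal.span ((fun i => X i ^ d i) '' A)

lemma powIdeal_eq_sup (d : σ → ℕ) (i : σ) :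
    powIdeal C d = powIdealOn C d {i}ᶜ ⊔ Ideal.span {X i ^ d i} := by
  rw [powIdeal, powIdealOn, ← Ideal.span_union, ← Set.image_univ, ← Set.compl_union_self {i},
    Set.image_union, Set.image_singleton]

lemma mem_powIdealOn_iff {d : σ → ℕ} {A : Set σ} {p : MvPolynomial σ C} :
    p ∈ powIdealOn C d A ↔ ∀ m ∈ p.support, ∃ i ∈ A, d i ≤ m i := by
  have himage : (fun i => X i ^ d i : σ → MvPolynomial σ C) '' A =
      (fun s => monomial s 1) '' ((fun i => Finsupp.single i (d i)) '' A) := by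
    simp only [Set.image_image, X_pow_eq_monomial]
  rw [powIdealOn, himage, mem_ideal_span_monomial_image]
  simp only [Set.exists_mem_image, Finsupp.single_le_iff]

lemma mem_powIdealOn_of_X_pow_mul_mem {d d' : σ → ℕ} {A : Set σ} {i : σ} {j : ℕ}
    (hd : ∀ l ∈ A, d' l ≤ d l - Finsupp.single i j l) {p : MvPolynomial σ C}
    (hp : X i ^ j * p ∈ powIdealOn C d A) : p ∈ powIdealOn C d' A := by
  rw [mem_powIdealOn_iff] at hp ⊢
  intro m hm
  obtain ⟨l, hl, hle⟩ := hp (Finsupp.single i j + m) (by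
    rwa [mem_support_iff, X_pow_eq_monomial, coeff_monomial_mul, one_mul, ← mem_support_iff])
  exact ⟨l, hl, (hd l hl).trans (Nat.sub_le_iff_le_add'.mpr hle)⟩

lemma powIdealOn_sup_span_X_pow [DecidableEq σ] {d : σ → ℕ} {A : Set σ} {i : σ} (hi : i ∈ A)
    {m : ℕ} (hm : m ≤ d i) :
    powIdealOn C d A ⊔ Ideal.span {X i ^ m} = powIdealOn C (Function.update d i m) A := by
  have hmem : X i ^ m ∈ powIdealOn C (Function.update d i m) A :=
    Ideal.subset_span ⟨i, hi, by simp⟩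
  refine le_antisymm (sup_le (Ideal.span_le.mpr ?_) ?_) (Ideal.span_le.mpr ?_)
  · rintro _ ⟨l, hl, rfl⟩
    obtain rfl | hli := eq_or_ne l i
    · exact Ideal.pow_mem_of_pow_mem _ hmem hm
    · exact Ideal.subset_span ⟨l, hl, by simp [hli]⟩
  · rwa [Ideal.span_singleton_le_iff_mem]
  · rintro _ ⟨l, hl, rfl⟩
    obtain rfl | hli := eq_or_ne l i
    · simpa using Ideal.mem_sup_right (Ideal.mem_span_singleton_self (X l ^ m))
    · have hmem : X l ^ d l ∈ powIdealOn C d A := Ideal.subset_span ⟨l, hl, rfl⟩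
      simpa [hli] using Ideal.mem_sup_left hmem

lemma mk_X_pow_dvd_mk_iff [DecidableEq σ] {d : σ → ℕ} {A : Set σ} {i : σ} (hi : i ∈ A) {m : ℕ}
    (hm : m ≤ d i) {p : MvPolynomial σ C} :
    Ideal.Quotient.mk (powIdealOn C d A) (X i) ^ m ∣ Ideal.Quotient.mk (powIdealOn C d A) p ↔
      p ∈ powIdealOn C (Function.update d i m) A := by
  rw [← powIdealOn_sup_span_X_pow hi hm, sup_comm, ← Ideal.mem_quotient_iff_mem_sup,
    Ideal.map_span, Set.image_singleton, Ideal.mem_span_singleton, map_pow]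

lemma isTruncatedPair_mk_X {d : σ → ℕ} {A : Set σ} {i j : σ} (hi : i ∈ A) (hj : j ∉ A)
    (hd : 1 ≤ d i) :
    IsTruncatedPair (d i) (Ideal.Quotient.mk (powIdealOn C d A) (X i))
      (Ideal.Quotient.mk (powIdealOn C d A) (X j)) where
  pow_eq_zero := by
    rw [← map_pow]
    exact Ideal.Quotient.eq_zero_iff_mem.mpr (Ideal.subset_span ⟨i, hi, rfl⟩)
  pow_sub_dvd m c hc := by
    classical
    obtain ⟨p, rfl⟩ := Ideal.Quotient.mk_surjective c
    rw [← map_pow, ← map_mul, Ideal.Quotient.eq_zero_iff_mem] at hc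
    rw [mk_X_pow_dvd_mk_iff hi (Nat.sub_le _ _)]
    refine mem_powIdealOn_of_X_pow_mul_mem (fun l _ => ?_) hc
    obtain rfl | hl := eq_or_ne l i
    · simp
    · simp [hl]
  dvd_of_dvd_mul c hc := by
    classical
    obtain ⟨p, rfl⟩ := Ideal.Quotient.mk_surjective c
    rw [← map_mul, ← pow_one (Ideal.Quotient.mk _ (X i)), mk_X_pow_dvd_mk_iff hi hd] at hc
    rw [← pow_one (Ideal.Quotient.mk _ (X i)), mk_X_pow_dvd_mk_iff hi hd]
    refine mem_powIdealOn_of_X_pow_mul_mem (i := j) (j := 1) (fun l hl => ?_) (by rwa [pow_one])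
    rw [Finsupp.single_eq_of_ne (ne_of_mem_of_not_mem hl hj), Nat.sub_zero]

end Presentation

section QuadraticLift

variable {C R A : Type*} [CommRing C] [CommRing R] [Algebra C R] [CommRing A] [Algebra C A]
  {x e : R}

open QuadraticAlgebra

/-- The extension of `f : R →ₐ[C] A` to `R[ω]/(ω² - e - xω)` sending `ω` to a root `y` of the same
equation in `A`. -/
noncomputable def quadraticLift (f : R →ₐ[C] A) (y : A) (hy : y ^ 2 = f e + f x * y) :
    QuadraticAlgebra R e x →ₐ[C] A :=
  letI := f.toRingHom.toAlgebra
  haveI : IsScalarTower C R A := .of_algebraMap_eq' f.comp_algebraMap.symm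
  (QuadraticAlgebra.lift ⟨y, by
    rw [← sq, hy, Algebra.smul_def, Algebra.smul_def, mul_one]; rfl⟩).restrictScalars C

variable (f : R →ₐ[C] A) {y : A} (hy : y ^ 2 = f e + f x * y)

lemma quadraticLift_mk (a b : R) : quadraticLift f y hy ⟨a, b⟩ = f a + f b * y := by
  let := f.toRingHom.toAlgebra
  change a • (1 : A) + b • y = _
  rw [Algebra.smul_def, Algebra.smul_def, mul_one]
  rfl

lemma quadraticLift_algebraMap (a : R) : quadraticLift f y hy (algebraMap R _ a) = f a := by
  rw [QuadraticAlgebra.algebraMap_eq, quadraticLift_mk, map_zero, zero_mul, add_zero]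

lemma quadraticLift_omega : quadraticLift f y hy omega = y := by
  rw [omega, quadraticLift_mk, map_zero, map_one, zero_add, one_mul]

lemma quadraticLift_star {τ : A →ₐ[C] A} (hf : ∀ a, τ (f a) = f a) (hτ : τ y = y + f x)
    (h2 : (2 : A) = 0) (t : QuadraticAlgebra R e x) :
    quadraticLift f y hy (star t) = τ (quadraticLift f y hy t) := by
  obtain ⟨a, b⟩ := t
  rw [star_mk, quadraticLift_mk, quadraticLift_mk]
  simp only [map_add, map_mul, map_neg, hf, hτ]
  linear_combination -(f b * y) * h2

lemma map_eq_zero_iff_mem_span {K : ℕ} (hR : IsTruncatedPair (2 ^ K) x e) (hK : 1 ≤ K)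
    (h2 : (2 : R) = 0)
    (hker : ∀ t, quadraticLift f y hy t = 0 ↔ omega ^ 2 ^ K ∣ t) (a : R) :
    f a = 0 ↔ a ∈ Ideal.span {x * frobSum K x e, e ^ 2 ^ K} := by
  rw [← quadraticLift_algebraMap f hy, hker, hR.omega_pow_dvd_algebraMap_iff hK h2]

lemma exists_map_eq_of_fixed {K : ℕ} (hR : IsTruncatedPair (2 ^ K) x e) (hK : 1 ≤ K)
    (h2 : (2 : R) = 0) (hker : ∀ t, quadraticLift f y hy t = 0 ↔ omega ^ 2 ^ K ∣ t)
    (hsurj : Function.Surjective (quadraticLift f y hy)) {τ : A →ₐ[C] A}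
    (hf : ∀ a, τ (f a) = f a) (hτ : τ y = y + f x) {p : A} (hp : τ p = p) :
    ∃ a, f a = p := by
  obtain ⟨t, rfl⟩ := hsurj p
  have ht : omega ^ 2 ^ K ∣ star t - t := by
    rw [← hker, map_sub, quadraticLift_star f hy hf hτ (two_eq_zero_of_ringHom f.toRingHom h2), hp,
      sub_self]
  obtain ⟨a, ha⟩ := hR.exists_omega_pow_dvd_sub_algebraMap hK h2 ht
  refine ⟨a, ?_⟩
  rw [← hker, map_sub, quadraticLift_algebraMap, sub_eq_zero] at ha
  exact ha.symm

end QuadraticLift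

section Shear

variable {σ C : Type*} [CommRing C]

lemma powIdealOn_le_ker_aeval {B : Type*} [CommRing B] [Algebra C B] {d : σ → ℕ} {A : Set σ}
    {f : σ → B} (hf : ∀ i ∈ A, f i ^ d i = 0) :
    powIdealOn C d A ≤ RingHom.ker (aeval f : MvPolynomial σ C →ₐ[C] B) := by
  rw [powIdealOn, Ideal.span_le]
  rintro _ ⟨i, hi, rfl⟩
  rw [SetLike.mem_coe, RingHom.mem_ker, map_pow, aeval_X, hf i hi]

variable (C) in
/-- The class of `X_i` in `C[X_i : i ∈ σ]/(X_i^{d_i} : i ∈ σ)`. -/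
noncomputable abbrev truncX (d : σ → ℕ) (i : σ) :
    MvPolynomial σ C ⧸ powIdeal C d :=
  Ideal.Quotient.mk _ (X i)

variable (C) in
/-- The class of `X_i` in `C[X_l : l ∈ σ]/(X_l^{d_l} : l ≠ j)`. -/
noncomputable abbrev truncXCompl (d : σ → ℕ) (j i : σ) :
    MvPolynomial σ C ⧸ powIdealOn C d {j}ᶜ :=
  Ideal.Quotient.mk _ (X i)

lemma truncX_pow_eq_zero (d : σ → ℕ) (i : σ) : truncX C d i ^ d i = 0 := by
  rw [← map_pow]
  exact Ideal.Quotient.eq_zero_iff_mem.mpr (Ideal.subset_span ⟨i, rfl⟩)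

lemma truncXCompl_pow_eq_zero (d : σ → ℕ) {i j : σ} (hi : i ≠ j) :
    truncXCompl C d j i ^ d i = 0 := by
  rw [← map_pow]
  exact Ideal.Quotient.eq_zero_iff_mem.mpr (Ideal.subset_span ⟨i, hi, rfl⟩)

variable (C) in
/-- The ideal `(X_i^{d_i} : i ∈ σ) + (X_{i₀}·S)`, where `S` is the Frobenius sum of `X_{i₀}` and
`X_{i₁}`. -/
noncomputable def invRelIdeal (K : ℕ) (i₀ i₁ : σ) (d : σ → ℕ) :
    Ideal (MvPolynomial σ C) :=
  powIdeal C d ⊔ Ideal.span {X i₀ * frobSum K (X i₀) (X i₁)}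

section InvGen

variable [DecidableEq σ] {i₀ i₁ : σ} {b : σ → Polynomial C} {B : Type*} [CommRing B] [Algebra C B]

/-- The expressions `ε_i + b_i(ε_{i₀})·ε_{i₁}` for `i ≠ i₁` and `ε_{i₁}² + ε_{i₀}·ε_{i₁}` for
`i = i₁`, which generate the invariants of the involution `ε_i ↦ ε_i + ε_{i₀} b_i(ε_{i₀})`. -/
noncomputable def invGen (i₀ i₁ : σ) (b : σ → Polynomial C) (ε : σ → B) : σ → B :=
  Function.update (fun i => ε i + Polynomial.aeval (ε i₀) (b i) * ε i₁) i₁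
    (ε i₁ ^ 2 + ε i₀ * ε i₁)

lemma invGen_snd (ε : σ → B) : invGen i₀ i₁ b ε i₁ = ε i₁ ^ 2 + ε i₀ * ε i₁ :=
  Function.update_self ..

lemma invGen_of_ne (ε : σ → B) {i : σ} (hi : i ≠ i₁) :
    invGen i₀ i₁ b ε i = ε i + Polynomial.aeval (ε i₀) (b i) * ε i₁ :=
  Function.update_of_ne hi ..

lemma map_invGen {B' : Type*} [CommRing B'] [Algebra C B'] (f : B →ₐ[C] B') (ε : σ → B) (i : σ) :
    f (invGen i₀ i₁ b ε i) = invGen i₀ i₁ b (f ∘ ε) i := by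
  obtain rfl | hi := eq_or_ne i i₁
  · simp only [invGen_snd, map_add, map_mul, map_pow, Function.comp_apply]
  · simp only [invGen_of_ne _ hi, map_add, map_mul, Polynomial.aeval_algHom_apply,
      Function.comp_apply]

end InvGen

/-- Exponents `d` and polynomials `b` for which `ε_i ↦ ε_i + ε_{i₀} b_i(ε_{i₀})` defines an
involution of `C[ε_i]/(ε_i^{d_i})` in characteristic two, where `ε_{i₀}` is fixed and
`ε_{i₁} ↦ ε_{i₁} + ε_{i₀}`. The last condition makes the `d_i`-th power of
`ε_i + b_i(ε_{i₀})·ε_{i₁}` vanish. -/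
structure IsShearDatum (K : ℕ) (i₀ i₁ : σ) (d : σ → ℕ) (b : σ → Polynomial C) : Prop where
  ne : i₀ ≠ i₁
  exponent_fst : d i₀ = 2 ^ K
  exponent_snd : d i₁ = 2 ^ K
  shear_fst : b i₀ = 0
  shear_snd : b i₁ = 1
  exists_exponent_eq : ∀ i, ∃ m, d i = 2 ^ m
  X_pow_dvd : ∀ i ≠ i₁, Polynomial.X ^ 2 ^ K ∣ b i ^ d i

namespace IsShearDatum

variable {K : ℕ} {i₀ i₁ : σ} {d : σ → ℕ} {b : σ → Polynomial C}

lemma isTruncatedPair (h : IsShearDatum K i₀ i₁ d b) :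
    IsTruncatedPair (2 ^ K) (truncXCompl C d i₁ i₀) (truncXCompl C d i₁ i₁) := by
  rw [← h.exponent_fst]
  exact isTruncatedPair_mk_X h.ne (by simp) (by rw [h.exponent_fst]; exact Nat.one_le_two_pow)

lemma add_aeval_mul_pow_eq_zero (h : IsShearDatum K i₀ i₁ d b) {B : Type*} [CommRing B]
    [Algebra C B] (h2 : (2 : B) = 0) {x u y : B} (hx : x ^ 2 ^ K = 0) {i : σ} (hi : i ≠ i₁)
    (hu : u ^ d i = 0) : (u + Polynomial.aeval x (b i) * y) ^ d i = 0 := by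
  obtain ⟨m, hm⟩ := h.exists_exponent_eq i
  obtain ⟨q, hq⟩ := h.X_pow_dvd i hi
  have hb : Polynomial.aeval x (b i) ^ d i = 0 := by
    rw [← map_pow, hq, map_mul, map_pow, Polynomial.aeval_X, hx, zero_mul]
  rw [hm, add_pow_two_pow h2, mul_pow, ← hm, hu, hb, zero_mul, add_zero]

variable [DecidableEq σ]

lemma invGen_fst (h : IsShearDatum K i₀ i₁ d b) {B : Type*} [CommRing B]
    [Algebra C B] (ε : σ → B) : invGen i₀ i₁ b ε i₀ = ε i₀ := by
  rw [invGen_of_ne ε h.ne, h.shear_fst, map_zero, zero_mul, add_zero]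

lemma map_invGen_of_shear (h : IsShearDatum K i₀ i₁ d b) {B : Type*} [CommRing B]
    [Algebra C B] (h2 : (2 : B) = 0) {ε : σ → B}
    {τ : B →ₐ[C] B} (hτ : ∀ i, τ (ε i) = ε i + ε i₀ * Polynomial.aeval (ε i₀) (b i)) (i : σ) :
    τ (invGen i₀ i₁ b ε i) = invGen i₀ i₁ b ε i := by
  have hfst : τ (ε i₀) = ε i₀ := by rw [hτ, h.shear_fst, map_zero, mul_zero, add_zero]
  have hsnd : τ (ε i₁) = ε i₁ + ε i₀ := by rw [hτ, h.shear_snd, map_one, mul_one]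
  obtain rfl | hi := eq_or_ne i i₁
  · simp only [invGen_snd, map_add, map_mul, map_pow, hfst, hsnd]
    linear_combination (ε i₀ * ε i + ε i₀ ^ 2) * h2
  · simp only [invGen_of_ne _ hi, map_add, map_mul, ← Polynomial.aeval_algHom_apply, hfst, hsnd,
      hτ i]
    linear_combination (ε i₀ * Polynomial.aeval (ε i₀) (b i)) * h2

/-- The homomorphism `X_i ↦ invGen i` out of `C[X_i]/(X_i^{d_i} : i ≠ i₁)`. -/
noncomputable def invHom (h : IsShearDatum K i₀ i₁ d b) (h2 : (2 : C) = 0) :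
    (MvPolynomial σ C ⧸ powIdealOn C d {i₁}ᶜ) →ₐ[C] MvPolynomial σ C ⧸ powIdeal C d :=
  Ideal.Quotient.liftₐ _ (aeval (invGen i₀ i₁ b (truncX C d))) fun _ hp =>
    powIdealOn_le_ker_aeval (fun i hi => by
      rw [invGen_of_ne _ hi]
      exact h.add_aeval_mul_pow_eq_zero (two_eq_zero_of_ringHom (algebraMap C _) h2)
        (h.exponent_fst ▸ truncX_pow_eq_zero d i₀) hi (truncX_pow_eq_zero d i)) hp

variable (h : IsShearDatum K i₀ i₁ d b) (h2 : (2 : C) = 0)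

lemma invHom_mk (p : MvPolynomial σ C) :
    h.invHom h2 (Ideal.Quotient.mk _ p) = aeval (invGen i₀ i₁ b (truncX C d)) p :=
  rfl

lemma invHom_truncXCompl (i : σ) :
    h.invHom h2 (truncXCompl C d i₁ i) = invGen i₀ i₁ b (truncX C d) i :=
  aeval_X ..

lemma invHom_truncXCompl_fst : h.invHom h2 (truncXCompl C d i₁ i₀) = truncX C d i₀ := by
  rw [invHom_truncXCompl, h.invGen_fst]

lemma invHom_fixed {τ : (MvPolynomial σ C ⧸ powIdeal C d) →ₐ[C] MvPolynomial σ C ⧸ powIdeal C d}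
    (hτ : ∀ i, τ (truncX C d i) =
      truncX C d i + truncX C d i₀ * Polynomial.aeval (truncX C d i₀) (b i))
    (a : MvPolynomial σ C ⧸ powIdealOn C d {i₁}ᶜ) : τ (h.invHom h2 a) = h.invHom h2 a := by
  suffices τ.comp (h.invHom h2) = h.invHom h2 from DFunLike.congr_fun this a
  refine Ideal.Quotient.algHom_ext _ (MvPolynomial.algHom_ext fun i => ?_)
  exact (congrArg τ (h.invHom_truncXCompl h2 i)).trans ((h.map_invGen_of_shear
    (two_eq_zero_of_ringHom (algebraMap C _) h2) hτ i).trans (h.invHom_truncXCompl h2 i).symm)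

lemma truncX_snd_sq : truncX C d i₁ ^ 2 = h.invHom h2 (truncXCompl C d i₁ i₁) +
    h.invHom h2 (truncXCompl C d i₁ i₀) * truncX C d i₁ := by
  rw [invHom_truncXCompl_fst, invHom_truncXCompl, invGen_snd]
  linear_combination -(truncX C d i₀ * truncX C d i₁) *
    two_eq_zero_of_ringHom (algebraMap C (MvPolynomial σ C ⧸ powIdeal C d)) h2

open QuadraticAlgebra

/-- The extension of `invHom` sending `ω` to `ε_{i₁}`, a root of
`y² = invHom e + invHom x · y`. -/
noncomputable abbrev quadHom :
    QuadraticAlgebra _ (truncXCompl C d i₁ i₁) (truncXCompl C d i₁ i₀) →ₐ[C]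
      MvPolynomial σ C ⧸ powIdeal C d :=
  quadraticLift (h.invHom h2) (truncX C d i₁) (h.truncX_snd_sq h2)

/-- The preimages under `quadHom` of the classes of the variables. -/
noncomputable def quadGen (i₀ i₁ : σ) (d : σ → ℕ) (b : σ → Polynomial C) :
    σ → QuadraticAlgebra _ (truncXCompl C d i₁ i₁) (truncXCompl C d i₁ i₀) :=
  Function.update (fun i => algebraMap _ _ (truncXCompl C d i₁ i) +
    Polynomial.aeval (algebraMap _ _ (truncXCompl C d i₁ i₀)) (b i) * omega) i₁ omega

lemma quadGen_snd : quadGen i₀ i₁ d b i₁ = omega :=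
  Function.update_self ..

lemma quadGen_of_ne {i : σ} (hi : i ≠ i₁) :
    quadGen i₀ i₁ d b i = algebraMap _ _ (truncXCompl C d i₁ i) +
      Polynomial.aeval (algebraMap _ _ (truncXCompl C d i₁ i₀)) (b i) * omega :=
  Function.update_of_ne hi ..

include h in
lemma quadGen_fst : quadGen i₀ i₁ d b i₀ = algebraMap _ _ (truncXCompl C d i₁ i₀) := by
  rw [quadGen_of_ne h.ne, h.shear_fst, map_zero, zero_mul, add_zero]

lemma quadHom_quadGen (i : σ) : h.quadHom h2 (quadGen i₀ i₁ d b i) = truncX C d i := by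
  obtain rfl | hi := eq_or_ne i i₁
  · rw [quadGen_snd, quadraticLift_omega]
  · rw [quadGen_of_ne hi, map_add, map_mul, ← Polynomial.aeval_algHom_apply, quadraticLift_omega,
      quadraticLift_algebraMap, quadraticLift_algebraMap, invHom_truncXCompl_fst,
      invHom_truncXCompl, invGen_of_ne _ hi]
    linear_combination (Polynomial.aeval (truncX C d i₀) (b i) * truncX C d i₁) *
      two_eq_zero_of_ringHom (algebraMap C (MvPolynomial σ C ⧸ powIdeal C d)) h2

lemma quadHom_aeval_quadGen (p : MvPolynomial σ C) :
    h.quadHom h2 (aeval (quadGen i₀ i₁ d b) p) = Ideal.Quotient.mk _ p := by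
  suffices (h.quadHom h2).comp (aeval (quadGen i₀ i₁ d b)) = Ideal.Quotient.mkₐ C _ from
    DFunLike.congr_fun this p
  refine MvPolynomial.algHom_ext fun i => ?_
  rw [AlgHom.comp_apply, aeval_X, quadHom_quadGen]
  rfl

lemma quadHom_surjective : Function.Surjective (h.quadHom h2) := fun q => by
  obtain ⟨p, rfl⟩ := Ideal.Quotient.mk_surjective q
  exact ⟨_, h.quadHom_aeval_quadGen h2 p⟩

include h h2 in
lemma invGen_quadGen (i : σ) :
    invGen i₀ i₁ b (quadGen i₀ i₁ d b) i = algebraMap _ _ (truncXCompl C d i₁ i) := by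
  have hT := two_eq_zero_of_ringHom (algebraMap C
    (QuadraticAlgebra _ (truncXCompl C d i₁ i₁) (truncXCompl C d i₁ i₀))) h2
  obtain rfl | hi := eq_or_ne i i₁
  · rw [invGen_snd, quadGen_snd, h.quadGen_fst, sq, omega_mul_omega_eq_algebraMap]
    linear_combination (algebraMap _ _ (truncXCompl C d i i₀) * omega) * hT
  · rw [invGen_of_ne _ hi, quadGen_of_ne hi, quadGen_snd, h.quadGen_fst]
    linear_combination (Polynomial.aeval (algebraMap _ _ (truncXCompl C d i₁ i₀)) (b i) * omega) *
      hT

include h h2 in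
lemma aeval_quadGen_surjective :
    Function.Surjective (aeval (quadGen i₀ i₁ d b) : MvPolynomial σ C →ₐ[C] _) := by
  have hX : aeval (R := C) (quadGen i₀ i₁ d b) ∘ (X : σ → MvPolynomial σ C) = quadGen i₀ i₁ d b :=
    funext (aeval_X _)
  have hbase (a : MvPolynomial σ C ⧸ powIdealOn C d {i₁}ᶜ) :
      ∃ p, aeval (R := C) (quadGen i₀ i₁ d b) p = algebraMap _ _ a := by
    obtain ⟨p, rfl⟩ := Ideal.Quotient.mk_surjective a
    refine ⟨aeval (invGen i₀ i₁ b X) p, ?_⟩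
    suffices (aeval (quadGen i₀ i₁ d b)).comp (aeval (invGen i₀ i₁ b X)) =
      (IsScalarTower.toAlgHom C _ _).comp (Ideal.Quotient.mkₐ C (powIdealOn C d {i₁}ᶜ)) from
      DFunLike.congr_fun this p
    refine MvPolynomial.algHom_ext fun i => ?_
    rw [AlgHom.comp_apply, aeval_X, map_invGen, hX]
    exact h.invGen_quadGen h2 i
  rintro ⟨α, β⟩
  obtain ⟨p, hp⟩ := hbase α
  obtain ⟨q, hq⟩ := hbase β
  refine ⟨p + q * X i₁, ?_⟩
  rw [map_add, map_mul, hp, hq, aeval_X, quadGen_snd, quadraticAlgebra_mk_eq]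

include h h2 in
lemma omega_pow_dvd_aeval_quadGen {p : MvPolynomial σ C} (hp : p ∈ powIdeal C d) :
    omega ^ 2 ^ K ∣ aeval (quadGen i₀ i₁ d b) p := by
  suffices powIdeal C d ≤ (Ideal.span {omega ^ 2 ^ K}).comap (aeval (quadGen i₀ i₁ d b)) from
    Ideal.mem_span_singleton.mp (this hp)
  rw [powIdeal, Ideal.span_le]
  rintro _ ⟨i, rfl⟩
  rw [SetLike.mem_coe, Ideal.mem_comap, Ideal.mem_span_singleton, map_pow, aeval_X]
  obtain rfl | hi := eq_or_ne i i₁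
  · rw [quadGen_snd, h.exponent_snd]
  · rw [quadGen_of_ne hi, h.add_aeval_mul_pow_eq_zero
      (two_eq_zero_of_ringHom (algebraMap C _) h2) _ hi]
    · exact dvd_zero _
    · rw [← map_pow, truncXCompl_pow_eq_zero d hi, map_zero]
    · rw [← map_pow, ← h.exponent_fst, truncXCompl_pow_eq_zero d h.ne, map_zero]

lemma quadHom_eq_zero_iff
    {t : QuadraticAlgebra _ (truncXCompl C d i₁ i₁) (truncXCompl C d i₁ i₀)} :
    h.quadHom h2 t = 0 ↔ omega ^ 2 ^ K ∣ t := by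
  constructor
  · obtain ⟨p, rfl⟩ := h.aeval_quadGen_surjective h2 t
    rw [quadHom_aeval_quadGen, Ideal.Quotient.eq_zero_iff_mem]
    exact h.omega_pow_dvd_aeval_quadGen h2
  · rintro ⟨u, rfl⟩
    rw [map_mul, map_pow, quadraticLift_omega, ← h.exponent_snd, truncX_pow_eq_zero, zero_mul]

omit [DecidableEq σ] in
include h in
lemma mk_mem_span_iff_mem_invRelIdeal {p : MvPolynomial σ C} :
    Ideal.Quotient.mk (powIdealOn C d {i₁}ᶜ) p ∈
        Ideal.span {truncXCompl C d i₁ i₀ * frobSum K (truncXCompl C d i₁ i₀)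
          (truncXCompl C d i₁ i₁), truncXCompl C d i₁ i₁ ^ 2 ^ K} ↔
      p ∈ invRelIdeal C K i₀ i₁ d := by
  rw [← map_frobSum, ← map_mul, ← map_pow, ← Set.image_pair, ← Ideal.map_span,
    Ideal.mem_quotient_iff_mem_sup, invRelIdeal, powIdeal_eq_sup d i₁, h.exponent_snd, sup_assoc,
    sup_comm, Ideal.span_insert, sup_comm (Ideal.span {X i₁ ^ 2 ^ K})]

include h h2 in
lemma aeval_invGen_eq_zero_iff (hK : 1 ≤ K) {p : MvPolynomial σ C} :
    aeval (invGen i₀ i₁ b (truncX C d)) p = 0 ↔ p ∈ invRelIdeal C K i₀ i₁ d := by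
  rw [← h.invHom_mk h2, map_eq_zero_iff_mem_span _ (h.truncX_snd_sq h2) h.isTruncatedPair hK
    (two_eq_zero_of_ringHom (algebraMap C _) h2) fun _ => h.quadHom_eq_zero_iff h2]
  exact h.mk_mem_span_iff_mem_invRelIdeal

include h h2 in
lemma exists_aeval_invGen_eq_of_fixed (hK : 1 ≤ K)
    {τ : (MvPolynomial σ C ⧸ powIdeal C d) →ₐ[C] MvPolynomial σ C ⧸ powIdeal C d}
    (hτ : ∀ i, τ (truncX C d i) =
      truncX C d i + truncX C d i₀ * Polynomial.aeval (truncX C d i₀) (b i))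
    {q : MvPolynomial σ C ⧸ powIdeal C d} (hq : τ q = q) :
    ∃ p, aeval (R := C) (invGen i₀ i₁ b (truncX C d)) p = q := by
  obtain ⟨a, ha⟩ := exists_map_eq_of_fixed _ (h.truncX_snd_sq h2) h.isTruncatedPair hK
    (two_eq_zero_of_ringHom (algebraMap C _) h2) (fun _ => h.quadHom_eq_zero_iff h2)
    (h.quadHom_surjective h2) (h.invHom_fixed h2 hτ)
    (by rw [hτ, h.shear_snd, map_one, mul_one, invHom_truncXCompl_fst]) hq
  obtain ⟨p, rfl⟩ := Ideal.Quotient.mk_surjective a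
  exact ⟨p, ha⟩

end IsShearDatum

theorem invariant_subalgebra_presentation_of_two_pow_general [DecidableEq σ] {K : ℕ} (hK : 1 ≤ K)
    (h2 : (2 : C) = 0) {i₀ i₁ : σ} {d : σ → ℕ} {b : σ → Polynomial C}
    (h : IsShearDatum K i₀ i₁ d b)
    {τ : (MvPolynomial σ C ⧸ powIdeal C d) →ₐ[C] MvPolynomial σ C ⧸ powIdeal C d}
    (hτ : ∀ i, τ (truncX C d i) =
      truncX C d i + truncX C d i₀ * Polynomial.aeval (truncX C d i₀) (b i)) :
    ∃ iso : (MvPolynomial σ C ⧸ invRelIdeal C K i₀ i₁ d) ≃ₐ[C]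
        AlgHom.equalizer τ (AlgHom.id C _),
      ∀ i, (iso (Ideal.Quotient.mk _ (X i)) : MvPolynomial σ C ⧸ powIdeal C d) =
        invGen i₀ i₁ b (truncX C d) i := by
  have hfix (p) : τ (aeval (R := C) (invGen i₀ i₁ b (truncX C d)) p) =
      aeval (R := C) (invGen i₀ i₁ b (truncX C d)) p :=
    h.invHom_fixed h2 hτ (Ideal.Quotient.mk _ p)
  let φ := (aeval (R := C) (invGen i₀ i₁ b (truncX C d))).codRestrict
    (AlgHom.equalizer τ (AlgHom.id C _)) hfix
  have hφker : invRelIdeal C K i₀ i₁ d = RingHom.ker φ := by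
    ext p
    rw [← h.aeval_invGen_eq_zero_iff h2 hK, RingHom.mem_ker, ← ZeroMemClass.coe_eq_zero]
    rfl
  have hφsurj : Function.Surjective φ := fun q => by
    obtain ⟨p, hp⟩ := h.exists_aeval_invGen_eq_of_fixed h2 hK hτ q.2
    exact ⟨p, Subtype.ext hp⟩
  exact ⟨(Ideal.quotientEquivAlgOfEq C hφker).trans
    (Ideal.quotientKerAlgEquivOfSurjective hφsurj), fun i => aeval_X ..⟩

end Shear

section PowersOfTwo

lemma two_pow_le_pred_mul_two_pow {K m q : ℕ} (hm : Odd m) (hm1 : 1 < m)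
    (h : 2 * 2 ^ K - 1 < m * 2 ^ (q + 1)) : 2 ^ K ≤ (m - 1) * 2 ^ q := by
  obtain hKq | hqK := le_or_gt K q
  · exact (Nat.pow_le_pow_right two_pos hKq).trans (Nat.le_mul_of_pos_left _ (by omega))
  · obtain ⟨r, rfl⟩ := Nat.exists_eq_add_of_lt hqK
    have hle : 2 ^ (r + 1) * 2 ^ (q + 1) ≤ m * 2 ^ (q + 1) := by
      rw [← pow_add, show r + 1 + (q + 1) = q + r + 1 + 1 by omega, pow_succ']
      omega
    have hne : 2 ^ (r + 1) ≠ m := by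
      rintro rfl
      exact Nat.not_odd_iff_even.mpr (even_two.pow_of_ne_zero r.succ_ne_zero) hm
    have hlt : 2 ^ (r + 1) < m :=
      lt_of_le_of_ne (Nat.le_of_mul_le_mul_right hle (by positivity)) hne
    calc 2 ^ (q + r + 1) = 2 ^ (r + 1) * 2 ^ q := by rw [← pow_add]; congr 1; omega
      _ ≤ (m - 1) * 2 ^ q := Nat.mul_le_mul_right _ (by omega)

lemma eq_of_two_pow_le_of_lt {K q : ℕ} (h1 : 2 ^ q ≤ 2 * 2 ^ K - 1)
    (h2 : 2 * 2 ^ K - 1 < 2 ^ (q + 1)) : q = K := by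
  have hK : 0 < 2 ^ K := by positivity
  have hqK : q < K + 1 := (Nat.pow_lt_pow_iff_right one_lt_two).mp (by rw [pow_succ']; omega)
  have hKq : K < q + 1 := (Nat.pow_lt_pow_iff_right one_lt_two).mp (by omega)
  omega

variable {n : ℕ}

lemma fin_val_one (hn : 2 ≤ n) : ((1 : Fin (n / 2 + 1)) : ℕ) = 1 := by
  rw [Fin.val_one', Nat.mod_eq_of_lt]
  omega

lemma fin_ne_one_iff (hn : 2 ≤ n) {i : Fin (n / 2 + 1)} : i ≠ 1 ↔ (i : ℕ) ≠ 1 := by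
  rw [ne_eq, Fin.ext_iff, fin_val_one hn]

/-- The exponents `n, 2^{k₂}, …, 2^{k_s}` of the relations defining `P n k`. -/
def truncExp (n : ℕ) (k : ℕ → ℕ) (i : Fin (n / 2 + 1)) : ℕ :=
  if (i : ℕ) = 0 then n else 2 ^ k ((i : ℕ) + 1)

/-- The polynomials `b_i` with `τ(ε_i) = ε_i + ε₁ b_i(ε₁)`. -/
noncomputable def shearPoly (n : ℕ) (i : Fin (n / 2 + 1)) : Polynomial (ZMod 2) :=
  if (i : ℕ) = 0 then 0 else Polynomial.X ^ (2 * (i : ℕ) - 2)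

lemma truncExp_zero (n : ℕ) (k : ℕ → ℕ) : truncExp n k 0 = n :=
  if_pos rfl

lemma truncExp_of_pos (k : ℕ → ℕ) {i : Fin (n / 2 + 1)} (hi : (i : ℕ) ≠ 0) :
    truncExp n k i = 2 ^ k ((i : ℕ) + 1) :=
  if_neg hi

lemma shearPoly_zero (n : ℕ) : shearPoly n 0 = 0 :=
  if_pos rfl

lemma shearPoly_of_pos {i : Fin (n / 2 + 1)} (hi : (i : ℕ) ≠ 0) :
    shearPoly n i = Polynomial.X ^ (2 * (i : ℕ) - 2) :=
  if_neg hi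

variable {K : ℕ} {k : ℕ → ℕ}

lemma truncExp_one (hn : 2 ≤ n) (hk2 : k 2 = K) : truncExp n k 1 = 2 ^ K := by
  rw [truncExp_of_pos k (by rw [fin_val_one hn]; exact one_ne_zero), fin_val_one hn, hk2]

lemma k_two_eq (hn : 2 ≤ n) (hnK : n = 2 ^ K)
    (hk : ∀ i : ℕ, 2 ≤ i → i ≤ n / 2 + 1 →
      (2 * i - 3) * 2 ^ k i ≤ 2 * n - 1 ∧ 2 * n - 1 < (2 * i - 3) * 2 ^ (k i + 1)) : k 2 = K := by
  obtain ⟨hle, hlt⟩ := hk 2 le_rfl (by omega)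
  rw [show 2 * 2 - 3 = 1 from rfl, one_mul, hnK] at hle hlt
  exact eq_of_two_pow_le_of_lt hle hlt

lemma isShearDatum_truncExp (hn : 2 ≤ n) (hnK : n = 2 ^ K)
    (hk : ∀ i : ℕ, 2 ≤ i → i ≤ n / 2 + 1 →
      (2 * i - 3) * 2 ^ k i ≤ 2 * n - 1 ∧ 2 * n - 1 < (2 * i - 3) * 2 ^ (k i + 1)) :
    IsShearDatum K 0 1 (truncExp n k) (shearPoly n) where
  ne := (fin_ne_one_iff hn).mpr Nat.zero_ne_one
  exponent_fst := (truncExp_zero n k).trans hnK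
  exponent_snd := truncExp_one hn (k_two_eq hn hnK hk)
  shear_fst := shearPoly_zero n
  shear_snd := by
    rw [shearPoly_of_pos (by rw [fin_val_one hn]; exact one_ne_zero), fin_val_one hn]
    exact pow_zero _
  exists_exponent_eq i := by
    obtain hi | hi := eq_or_ne (i : ℕ) 0
    · exact ⟨K, (if_pos hi).trans hnK⟩
    · exact ⟨_, truncExp_of_pos k hi⟩
  X_pow_dvd i hi := by
    rw [fin_ne_one_iff hn] at hi
    obtain rfl | hi0 := eq_or_ne i 0
    · rw [shearPoly_zero, truncExp_zero, zero_pow (by omega)]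
      exact dvd_zero _
    · have hi2 : 2 ≤ (i : ℕ) := by have := Fin.val_ne_zero_iff.mpr hi0; omega
      rw [shearPoly_of_pos (by omega), truncExp_of_pos k (by omega), ← pow_mul]
      refine pow_dvd_pow _ (two_pow_le_pred_mul_two_pow (m := 2 * ((i : ℕ) + 1) - 3)
        ⟨i - 1, by omega⟩ (by omega) ?_)
      rw [← hnK]
      exact (hk (i + 1) (by omega) (by omega)).2

lemma relIdealPow_eq (hnK : n = 2 ^ K) (hk2 : k 2 = K) :
    relIdealPow n K k = invRelIdeal (ZMod 2) K 0 1 (truncExp n k) := by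
  have hrange : (fun c : Fin (n / 2 + 1) => (if (c : ℕ) ≤ 1 then X c ^ 2 ^ K
      else X c ^ 2 ^ k ((c : ℕ) + 1) : MvPolynomial _ (ZMod 2))) =
      fun c => X c ^ truncExp n k c := by
    funext c
    split_ifs with hc
    · obtain h0 | h1 : (c : ℕ) = 0 ∨ (c : ℕ) = 1 := by omega
      · rw [truncExp, if_pos h0, ← hnK]
      · rw [truncExp_of_pos k (by omega), h1, hk2]
    · rw [truncExp_of_pos k (by omega)]
  rw [relIdealPow, hrange, Ideal.span_insert, sup_comm]
  rfl

lemma shear_eps {τ : P n k →ₐ[ZMod 2] P n k} (hτ0 : τ (eps n k 0) = eps n k 0)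
    (hτ : ∀ i : Fin (n / 2 + 1), 1 ≤ (i : ℕ) →
      τ (eps n k i) = eps n k i + eps n k 0 ^ (2 * (i : ℕ) - 1)) (i : Fin (n / 2 + 1)) :
    τ (eps n k i) = eps n k i + eps n k 0 * Polynomial.aeval (eps n k 0) (shearPoly n i) := by
  obtain rfl | hi := eq_or_ne i 0
  · rw [hτ0, shearPoly_zero, map_zero, mul_zero, add_zero]
  · have hi' : (i : ℕ) ≠ 0 := Fin.val_ne_zero_iff.mpr hi
    rw [hτ i (by omega), shearPoly_of_pos hi', map_pow, Polynomial.aeval_X, ← pow_succ']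
    congr 2
    omega

lemma invGen_eps_of_two_le (hn : 2 ≤ n) (k : ℕ → ℕ) {c : Fin (n / 2 + 1)} (hc : 2 ≤ (c : ℕ)) :
    invGen 0 1 (shearPoly n) (eps n k) c =
      eps n k c + eps n k 0 ^ (2 * (c : ℕ) - 2) * eps n k 1 := by
  rw [invGen_of_ne _ ((fin_ne_one_iff hn).mpr (by omega)), shearPoly_of_pos (by omega), map_pow,
    Polynomial.aeval_X]

end PowersOfTwo

/-- Fix `n ≥ 2`, `s = n/2 + 1`, `k i` as in the context, the algebra
`P = 𝔽₂[ε₁,…,ε_s]/(ε₁ⁿ, ε₂^{2^{k₂}}, …, ε_s^{2^{k_s}})` and the involution `τ` with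
`τ(ε̄₁) = ε̄₁`, `τ(ε̄ᵢ) = ε̄ᵢ + ε̄₁^{2i−3}`; `Pfix n k τ` is the invariant subalgebra `P^τ`.
Suppose `n = 2^K` with `K ≥ 1` (so that `k 2 = K`). Then there is an isomorphism of
`𝔽₂`-algebras
`P^τ ≅ 𝔽₂[e₁,…,e_s]/(e₁^{2^K}, e₂^{2^K}, e₃^{2^{k₃}}, …, e_s^{2^{k_s}},
e₁·(Σ_{j=0}^{K−1} e₁^{2^K−2^{j+1}}·e₂^{2^j}))` (formulated below in the other direction)
given by `e₁ ↦ ε̄₁`, `e₂ ↦ ε̄₂² + ε̄₁ε̄₂`, and `e_i ↦ ε̄_i + ε̄₁^{2i−4}ε̄₂` for `3 ≤ i ≤ s`. -/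
theorem invariant_subalgebra_presentation_of_two_pow
    (n : ℕ) (hn : 2 ≤ n) (K : ℕ) (hK : 1 ≤ K) (hnK : n = 2 ^ K) (k : ℕ → ℕ)
    (hk : ∀ i : ℕ, 2 ≤ i → i ≤ n / 2 + 1 →
      (2 * i - 3) * 2 ^ k i ≤ 2 * n - 1 ∧ 2 * n - 1 < (2 * i - 3) * 2 ^ (k i + 1))
    (τ : P n k →ₐ[ZMod 2] P n k)
    (hτ0 : τ (eps n k 0) = eps n k 0)
    (hτ : ∀ i : Fin (n / 2 + 1), 1 ≤ (i : ℕ) →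
      τ (eps n k i) = eps n k i + eps n k 0 ^ (2 * (i : ℕ) - 1)) :
    ∃ iso : (MvPolynomial (Fin (n / 2 + 1)) (ZMod 2) ⧸ relIdealPow n K k) ≃ₐ[ZMod 2]
        Pfix n k τ,
      (∀ u : Pfix n k τ, (u : P n k) = eps n k 0 →
        iso (Ideal.Quotient.mk (relIdealPow n K k) (X 0)) = u) ∧
      (∀ u : Pfix n k τ, (u : P n k) = eps n k 1 ^ 2 + eps n k 0 * eps n k 1 →
        iso (Ideal.Quotient.mk (relIdealPow n K k) (X 1)) = u) ∧
      (∀ c : Fin (n / 2 + 1), 2 ≤ (c : ℕ) →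
        ∀ u : Pfix n k τ,
          (u : P n k) = eps n k c + eps n k 0 ^ (2 * (c : ℕ) - 2) * eps n k 1 →
          iso (Ideal.Quotient.mk (relIdealPow n K k) (X c)) = u) := by
  have h := isShearDatum_truncExp hn hnK hk
  rw [relIdealPow_eq hnK (k_two_eq hn hnK hk)]
  obtain ⟨iso, hiso⟩ := invariant_subalgebra_presentation_of_two_pow_general hK
    (CharTwo.two_eq_zero (R := ZMod 2)) h (shear_eps hτ0 hτ)
  refine ⟨iso, fun u hu => ?_, fun u hu => ?_, fun c hc u hu => ?_⟩
  · exact Subtype.ext ((hiso 0).trans ((h.invGen_fst _).trans hu.symm))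
  · exact Subtype.ext ((hiso 1).trans ((invGen_snd _).trans hu.symm))
  · exact Subtype.ext ((hiso c).trans ((invGen_eps_of_two_le hn k hc).trans hu.symm))
end

section
/- Let r ≥ 1 and let M = ℤ^{2r}/ℤ·(1,1,…,1) be the quotient of the free abelian group on e₁, …, e_{2r} by the subgroup generated by e₁ + e₂ + ⋯ + e_{2r}; write ē_i for the image of e_i. Let τ : M → M be the involution induced by e_i ↦ −e_{2r+1−i}. Then the quotient group M^τ/(1+τ)M, where M^τ = {v ∈ M : τ(v) = v} and (1+τ)M = {v + τ(v) : v ∈ M}, is cyclic of order 2, generated by the class of ē₁ + ē₂ + ⋯ + ē_r. -/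
/-!
If `τ [x] = [x]`, then `x i + x (σ i)` is a constant `c`. Adding a constant `a` to `x` changes `c`
by `2 a`, and `c = 0` when `x = y - y ∘ σ`; so `c` modulo `2` is an invariant of `[x]` modulo the
norms `v + τ v`. It is a complete one: given `w` with `w i + w (σ i) = 1`, if `c = 2 k` then
`x = v - v ∘ σ + k` for `v = w (x - k)`.
-/

/-- The module `R^ι / R·(1, …, 1)` of functions modulo constants. -/
abbrev FunModConst (R ι : Type*) [Ring R] : Type _ :=
  (ι → R) ⧸ Submodule.span R {(fun _ => 1 : ι → R)}

/-- `x i + x (σ i)` takes the constant value `c`. When `σ` is an involution, `c` modulo `2` is the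
invariant that detects norms among the classes fixed by `x ↦ -x ∘ σ` in `FunModConst`. -/
def HasPairSum {R ι : Type*} [Add R] (σ : ι → ι) (x : ι → R) (c : R) : Prop :=
  ∀ i, x i + x (σ i) = c

theorem HasPairSum.sub {A ι : Type*} [AddCommGroup A] {σ : ι → ι} {x y : ι → A} {c d : A}
    (hx : HasPairSum σ x c) (hy : HasPairSum σ y d) : HasPairSum σ (x - y) (c - d) := fun i => by
  rw [← hx i, ← hy i, Pi.sub_apply, Pi.sub_apply, sub_add_sub_comm]

theorem hasPairSum_rev_lowerHalf (r : ℕ) :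
    HasPairSum Fin.rev (fun i : Fin (2 * r) => if (i : ℕ) < r then (1 : ℤ) else 0) 1 := fun i => by
  have hrev := Fin.val_rev i
  dsimp only
  split_ifs <;> omega

namespace FunModConst

open Submodule.Quotient (mk mk_add mk_sub mk_surjective)

variable {R ι : Type*} [Ring R] {σ : ι → ι} {w x : ι → R} {c : R}
  {τ : FunModConst R ι → FunModConst R ι}

theorem mk_eq_mk_iff {x y : ι → R} :
    (mk x : FunModConst R ι) = mk y ↔ ∃ a : R, ∀ i, x i = y i + a := by
  rw [Submodule.Quotient.eq, Submodule.mem_span_singleton]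
  refine exists_congr fun a => funext_iff.trans <| forall_congr' fun i => ?_
  rw [Pi.smul_apply, Pi.sub_apply, smul_eq_mul, mul_one, eq_sub_iff_add_eq', eq_comm]

theorem apply_mk_eq_self_iff (hτ : ∀ x, τ (mk x) = mk (fun i => -x (σ i))) :
    τ (mk x) = mk x ↔ ∃ c, HasPairSum σ x c := by
  rw [hτ, eq_comm, mk_eq_mk_iff]
  simp only [HasPairSum, ← sub_eq_iff_eq_add', sub_neg_eq_add]

theorem even_of_mk_eq_add_apply {i : ι} (hσ : σ (σ i) = i)
    (hτ : ∀ x, τ (mk x) = mk (fun i => -x (σ i))) (hx : HasPairSum σ x c)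
    {v : FunModConst R ι} (hv : mk x = v + τ v) : Even c := by
  obtain ⟨y, rfl⟩ := mk_surjective _ v
  rw [hτ, ← mk_add, eq_comm, mk_eq_mk_iff] at hv
  obtain ⟨a, ha⟩ := hv
  have hi : y i + -y (σ i) = x i + a := ha i
  have hσi : y (σ i) + -y i = x (σ i) + a := by simpa only [Pi.add_apply, hσ] using ha (σ i)
  have hsum : c + (a + a) = 0 := by
    rw [← hx i, add_add_add_comm, ← hi, ← hσi]
    abel
  exact ⟨-a, by rw [eq_neg_of_add_eq_zero_left hsum, neg_add]⟩

theorem exists_mk_eq_add_apply (hτ : ∀ x, τ (mk x) = mk (fun i => -x (σ i)))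
    (hw : HasPairSum σ w 1) (hx : HasPairSum σ x c) (hc : Even c) :
    ∃ v, mk x = v + τ v := by
  obtain ⟨k, rfl⟩ := hc
  refine ⟨mk fun i => w i * (x i - k), ?_⟩
  rw [hτ, ← mk_add, mk_eq_mk_iff]
  refine ⟨k, fun i => ?_⟩
  have hneg : -(x (σ i) - k) = x i - k := by
    rw [neg_sub, sub_eq_sub_iff_add_eq_add, hx i]
  calc x i = (w i + w (σ i)) * (x i - k) + k := by rw [hw i, one_mul, sub_add_cancel]
    _ = w i * (x i - k) + -(w (σ i) * (x (σ i) - k)) + k := by rw [add_mul, ← mul_neg, hneg]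

end FunModConst

open FunModConst Submodule.Quotient in
theorem fixedPoints_mod_norms_cyclic_of_order_two_general {R ι : Type*} [Ring R] [Nonempty ι]
    (hR : ∀ c : R, Even c ∨ Odd c) (h1 : ¬Even (1 : R))
    {σ : ι → ι} (hσ : Function.Involutive σ) {w : ι → R} (hw : HasPairSum σ w 1)
    {τ : FunModConst R ι → FunModConst R ι} (hτ : ∀ x, τ (mk x) = mk (fun i => -x (σ i))) :
    τ (mk w) = mk w ∧ (¬∃ v, v + τ v = mk w) ∧
      ∀ u, τ u = u → (∃ v, u = v + τ v) ∨ ∃ v, u - mk w = v + τ v := by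
  obtain ⟨i⟩ := ‹Nonempty ι›
  refine ⟨(apply_mk_eq_self_iff hτ).2 ⟨1, hw⟩,
    fun ⟨_, hv⟩ => h1 (even_of_mk_eq_add_apply (hσ i) hτ hw hv.symm), fun u hu => ?_⟩
  obtain ⟨x, rfl⟩ := mk_surjective _ u
  obtain ⟨c, hx⟩ := (apply_mk_eq_self_iff hτ).1 hu
  refine (hR c).imp (exists_mk_eq_add_apply hτ hw hx) fun hc => ?_
  rw [← mk_sub]
  exact exists_mk_eq_add_apply hτ hw (hx.sub hw) (hc.sub_odd odd_one)

/-- Let `r ≥ 1` and let `M = ℤ^{2r}/ℤ·(1,…,1)`. Let `τ : M → M` be the involution induced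
by `eᵢ ↦ −e_{2r+1−i}` (in `Fin (2*r)`-indexed coordinates, `v ↦ fun i => -v i.rev`). Then
the quotient group `M^τ/(1+τ)M` is cyclic of order 2, generated by the class of
`ē₁ + ē₂ + ⋯ + ē_r`; concretely: the class `w` of the indicator vector of the first `r`
coordinates is `τ`-invariant, `w` is not of the form `v + τ v`, and every `τ`-invariant
element of `M` is, modulo the subgroup `{v + τ v}`, equal to `0` or to `w`. -/
theorem fixedPoints_mod_norms_cyclic_of_order_two
    (r : ℕ) (hr : 1 ≤ r)
    (τ : ((Fin (2 * r) → ℤ) ⧸ Submodule.span ℤ {(fun _ => 1 : Fin (2 * r) → ℤ)}) →+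
         ((Fin (2 * r) → ℤ) ⧸ Submodule.span ℤ {(fun _ => 1 : Fin (2 * r) → ℤ)}))
    (hτ : ∀ v : Fin (2 * r) → ℤ,
      τ (Submodule.Quotient.mk v) = Submodule.Quotient.mk (fun i => - v i.rev)) :
    (τ (Submodule.Quotient.mk (fun i : Fin (2 * r) => if (i : ℕ) < r then (1 : ℤ) else 0)) =
       Submodule.Quotient.mk (fun i : Fin (2 * r) => if (i : ℕ) < r then (1 : ℤ) else 0)) ∧
    (¬ ∃ v, v + τ v =
       (Submodule.Quotient.mk (fun i : Fin (2 * r) => if (i : ℕ) < r then (1 : ℤ) else 0) :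
          (Fin (2 * r) → ℤ) ⧸ Submodule.span ℤ {(fun _ => 1 : Fin (2 * r) → ℤ)})) ∧
    (∀ u, τ u = u →
      (∃ v, u = v + τ v) ∨
      ∃ v, u - (Submodule.Quotient.mk (fun i : Fin (2 * r) =>
            if (i : ℕ) < r then (1 : ℤ) else 0) :
          (Fin (2 * r) → ℤ) ⧸ Submodule.span ℤ {(fun _ => 1 : Fin (2 * r) → ℤ)}) =
        v + τ v) := by
  have : Nonempty (Fin (2 * r)) := ⟨⟨0, by omega⟩⟩
  exact fixedPoints_mod_norms_cyclic_of_order_two_general Int.even_or_odd Int.not_even_one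
    Fin.rev_involutive (hasPairSum_rev_lowerHalf r) hτ
end
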